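/- Let β > 2 and suppose p, q ∈ (0,1/2) with p < 1/3 < q are such that p and q are exactly the solutions of f_0(t) = β in (0,1/2). Set m_0^β = (p,p), m_1^β = (1−2p,p), m_2^β = (p,1−2p), σ_0^β = (q,q), σ_1^β = (1−2q,q), σ_2^β = (q,1−2q), and H_β = F_β(σ_0^β). Let W_β = {x ∈ Ξ° : F_β(x) < H_β} and, for i = 0,1,2, let W_β(i) be the connected component of W_β containing m_i^β. Then W_β(0), W_β(1), W_β(2) are pairwise distinct, and for every choice of indices with {i,j,k} = {0,1,2}, the intersection of the closures of W_β(i) and W_β(j) equals the singleton {σ_k^β}. -/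

import Mathlib

/-!
In barycentric coordinates `X 0, X 1, X 2` the potential is symmetric and separates:
`F_β = 1/4 + ∑ᵢ G(Xᵢ)` with `G(t) = -(3/4)t² + (1/β) t log(3t)`.

*Separation.* On the line `Xᵢ = Xⱼ = t` the potential is `φ(t) = 2G(t) + G(1-2t)`, and on
`[1/3, 1/2]` the function `φ` is strictly decreasing up to `q` and strictly increasing afterwards
(`ray_le`): its derivative is a multiple of a strictly convex function vanishing at `1/3` and `q`.
Hence `{F < H}` misses the three rays joining the centre to the midpoints of the edges, so it
lies in the disjoint union of the open sectors `D i` where `Xᵢ` is the strict maximum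
(`W_subset_sectors`). Thus a valley stays in its sector, and two closures can meet only on a
common ray at level `≤ H`, i.e. at a saddle.

*Each sector carries one valley.* Let `C` be a component of `{F < H}` inside `D i`, and let `y`
minimise `F` on the compact closure of `C`. The point `y` is not on the boundary of the simplex,
since the entropy has slope `-∞` there (`boundary_descent`). So `y` is a critical point of `F`
in `C`: the values `log Xᵢ - (3β/2) Xᵢ` agree at `y`, and strict concavity of `log` forces two
coordinates to be equal. In `D i` this leaves only `f₀(t) = β` with `t < 1/3`, that is `y = mᵢ`
(`minimum_mem_component`). So `C` is the valley of `mᵢ`.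

*Saddles are reached.* `G` is strictly concave on `[1/3, ∞)`, so moving from `σ_k` along the
direction `eᵢ - eⱼ` strictly lowers `F` and enters `D i`; by the previous step these points,
which accumulate at `σ_k`, belong to the valley of `mᵢ`.
-/

/-- The spin value `v_k = (cos(2πk/3), sin(2πk/3))`. -/
noncomputable def potV (k : ℕ) : ℝ × ℝ :=
  (Real.cos (2 * Real.pi * k / 3), Real.sin (2 * Real.pi * k / 3))

/-- `ψ(x) = (2x₁+x₂−1)v₁ + (x₁+2x₂−1)v₂`. -/
noncomputable def potPsi (x : ℝ × ℝ) : ℝ × ℝ :=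
  ((2 * x.1 + x.2 - 1) * (potV 1).1 + (x.1 + 2 * x.2 - 1) * (potV 2).1,
   (2 * x.1 + x.2 - 1) * (potV 1).2 + (x.1 + 2 * x.2 - 1) * (potV 2).2)

/-- The entropy `S(x) = Σᵢ xᵢ log(3xᵢ)` with `x₀ = 1 − x₁ − x₂`
(the convention `t log t = 0` at `t = 0` holds since `Real.log 0 = 0`). -/
noncomputable def potS (x : ℝ × ℝ) : ℝ :=
  (1 - x.1 - x.2) * Real.log (3 * (1 - x.1 - x.2))
    + x.1 * Real.log (3 * x.1) + x.2 * Real.log (3 * x.2)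

/-- The mean-field Potts potential `F_β(x) = −(1/2)|ψ(x)|² + (1/β)S(x)`. -/
noncomputable def potF (β : ℝ) (x : ℝ × ℝ) : ℝ :=
  - (1 / 2) * ((potPsi x).1 ^ 2 + (potPsi x).2 ^ 2) + (1 / β) * potS x

/-- The open two-dimensional simplex `Ξ°`. -/
def simplexInt : Set (ℝ × ℝ) := {x | 0 < x.1 ∧ 0 < x.2 ∧ x.1 + x.2 < 1}

/-- `f₀(t) = (2/(3(1−3t))) log((1−2t)/t)` for `t ≠ 1/3`, with `f₀(1/3) = 2`. -/
noncomputable def f0 (t : ℝ) : ℝ :=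
  if t = 1 / 3 then 2 else 2 / (3 * (1 - 3 * t)) * Real.log ((1 - 2 * t) / t)

/-! ### Barycentric coordinates and the separated form of the potential -/

/-- The barycentric coordinates `x₀ = 1 - x₁ - x₂`, `x₁`, `x₂`. -/
def X (i : Fin 3) (x : ℝ × ℝ) : ℝ := ![1 - x.1 - x.2, x.1, x.2] i

/-- The vertices of the simplex. -/
def E (i : Fin 3) : ℝ × ℝ := ![(0, 0), (1, 0), (0, 1)] i

/-- The one-coordinate contribution to the potential. -/
noncomputable def G (β t : ℝ) : ℝ := -(3 / 4) * t ^ 2 + (1 / β) * (t * Real.log (3 * t))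

/-- The open sector of the plane where the `i`-th barycentric coordinate is the strict maximum. -/
def D (i : Fin 3) : Set (ℝ × ℝ) := {x | ∀ j, j ≠ i → X j x < X i x}

/-- The sublevel set `W_β`, the level being that of the saddle `(q, q)`. -/
def Wset (β q : ℝ) : Set (ℝ × ℝ) := {x ∈ simplexInt | potF β x < potF β (q, q)}

lemma sum_distinct {i j k : Fin 3} (hij : i ≠ j) (hjk : j ≠ k) (hik : i ≠ k) (f : Fin 3 → ℝ) :
    ∑ l, f l = f i + f j + f k := by
  rw [Fin.sum_univ_three]
  fin_cases i <;> fin_cases j <;> fin_cases k <;> simp at hij hjk hik ⊢ <;> ring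

lemma X_sum (x : ℝ × ℝ) : ∑ l, X l x = 1 := by
  rw [Fin.sum_univ_three]; simp [X]; ring

lemma X_ext {i j k : Fin 3} (hij : i ≠ j) (hjk : j ≠ k) (hik : i ≠ k) {x y : ℝ × ℝ}
    (hi : X i x = X i y) (hj : X j x = X j y) : x = y := by
  have h1 := X_sum x
  have h2 := X_sum y
  rw [sum_distinct hij hjk hik] at h1 h2
  have hk : X k x = X k y := by linarith
  have hall : ∀ l, X l x = X l y := by
    intro l
    have : l = i ∨ l = j ∨ l = k := by omega
    rcases this with rfl | rfl | rfl <;> assumption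
  have e1 := hall 1
  have e2 := hall 2
  simp [X] at e1 e2
  exact Prod.ext e1 e2

lemma X_continuous (i : Fin 3) : Continuous (X i) := by
  fin_cases i <;> unfold X <;> simp <;> fun_prop

lemma X_move (l i j : Fin 3) (x : ℝ × ℝ) (s : ℝ) :
    X l (x + s • (E i - E j)) =
      X l x + s * ((if l = i then 1 else 0) - (if l = j then 1 else 0)) := by
  fin_cases l <;> fin_cases i <;> fin_cases j <;> simp [X, E] <;> ring

lemma X_centre (l : Fin 3) (x : ℝ × ℝ) (s : ℝ) :
    X l (x + s • (((1 / 3, 1 / 3) : ℝ × ℝ) - x)) = (1 - s) * X l x + s / 3 := by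
  fin_cases l <;> simp [X] <;> ring

lemma mem_simplex_iff (x : ℝ × ℝ) : x ∈ simplexInt ↔ ∀ i, 0 < X i x := by
  simp only [simplexInt, Set.mem_ofPred_eq, Fin.forall_fin_succ, X]
  simp
  constructor
  · rintro ⟨h1, h2, h3⟩; exact ⟨by linarith, h1, h2⟩
  · rintro ⟨h1, h2, h3⟩; exact ⟨h2, h3, by linarith⟩

lemma potF_eq (β : ℝ) (x : ℝ × ℝ) : potF β x = 1 / 4 + ∑ i, G β (X i x) := by
  have c1 : Real.cos (2 * Real.pi / 3) = -1 / 2 := by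
    rw [show 2 * Real.pi / 3 = Real.pi - Real.pi / 3 by ring, Real.cos_pi_sub,
      Real.cos_pi_div_three]; ring
  have s1 : Real.sin (2 * Real.pi / 3) = √3 / 2 := by
    rw [show 2 * Real.pi / 3 = Real.pi - Real.pi / 3 by ring, Real.sin_pi_sub,
      Real.sin_pi_div_three]
  have c2 : Real.cos (2 * Real.pi * 2 / 3) = -1 / 2 := by
    rw [show 2 * Real.pi * 2 / 3 = Real.pi / 3 + Real.pi by ring, Real.cos_add_pi,
      Real.cos_pi_div_three]; ring
  have s2 : Real.sin (2 * Real.pi * 2 / 3) = -(√3 / 2) := by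
    rw [show 2 * Real.pi * 2 / 3 = Real.pi / 3 + Real.pi by ring, Real.sin_add_pi,
      Real.sin_pi_div_three]
  have h3 : √3 ^ 2 = 3 := Real.sq_sqrt (by norm_num)
  rw [Fin.sum_univ_three]
  simp only [potF, potPsi, potV, potS, G, X, Nat.cast_one, Nat.cast_ofNat, mul_one, c1, c2, s1, s2]
  simp
  linear_combination (-(1 / 8) * (x.1 - x.2) ^ 2) * h3

lemma G_continuous (β : ℝ) : Continuous (G β) := by
  have h : Continuous fun t : ℝ => t * Real.log (3 * t) := by
    have h1 : Continuous fun t : ℝ => (1 / 3) * ((3 * t) * Real.log (3 * t)) :=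
      (Real.continuous_mul_log.comp (continuous_const.mul continuous_id)).const_mul _
    convert h1 using 2; ring
  unfold G; fun_prop

lemma potF_continuous (β : ℝ) : Continuous (potF β) := by
  have : potF β = fun x => 1 / 4 + ∑ i, G β (X i x) := funext (potF_eq β)
  rw [this]
  exact continuous_const.add
    (continuous_finsetSum _ fun i _ => (G_continuous β).comp (X_continuous i))

lemma G_hasDerivAt (β : ℝ) {t : ℝ} (ht : 0 < t) :
    HasDerivAt (G β) (-(3 / 2) * t + (1 / β) * (Real.log (3 * t) + 1)) t := by
  have h1 : HasDerivAt (fun t : ℝ => Real.log (3 * t)) (3 * 1 / (3 * t)) t :=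
    ((hasDerivAt_id t).const_mul 3).log (by simp; exact ht.ne')
  have h2 := (((hasDerivAt_id t).pow 2).const_mul (-(3 / 4))).add
    (((hasDerivAt_id t).mul h1).const_mul (1 / β))
  refine h2.congr_deriv ?_
  simp
  field_simp
  ring

/-! ### The potential on the symmetry axes -/

/-- The function whose sign governs monotonicity of `F` along an axis is strictly convex. -/
lemma axis_strictConvex (β : ℝ) :
    StrictConvexOn ℝ (Set.Ico (1 / 3 : ℝ) (1 / 2))
      (fun t => Real.log t - Real.log (1 - 2 * t) - 3 * β / 2 * (3 * t - 1)) := by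
  have hd : ∀ t ∈ Set.Ioo (1 / 3 : ℝ) (1 / 2), HasDerivAt
      (fun t => Real.log t - Real.log (1 - 2 * t) - 3 * β / 2 * (3 * t - 1))
      (t⁻¹ + 2 * (1 - 2 * t)⁻¹ - 9 * β / 2) t := by
    intro t ht
    have h1 : HasDerivAt (fun t : ℝ => 1 - 2 * t) (-(2 * 1)) t :=
      ((hasDerivAt_id t).const_mul 2).const_sub 1
    have h2 := h1.log (by linarith [ht.2])
    have h3 : HasDerivAt (fun t : ℝ => 3 * β / 2 * (3 * t - 1)) (3 * β / 2 * (3 * 1)) t :=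
      (((hasDerivAt_id t).const_mul 3).sub_const 1).const_mul _
    refine (((Real.hasDerivAt_log (by linarith [ht.1])).sub h2).sub h3).congr_deriv ?_
    ring
  refine StrictMonoOn.strictConvexOn_of_deriv (convex_Ico _ _) ?_ ?_
  · intro t ht
    have h1 : t ≠ 0 := by linarith [ht.1]
    have h2 : 1 - 2 * t ≠ 0 := by linarith [ht.2]
    refine ContinuousAt.continuousWithinAt ?_
    fun_prop (disch := assumption)
  · rw [interior_Ico]
    intro s hs t ht hst
    rw [(hd s hs).deriv, (hd t ht).deriv]
    have hs1 := hs.1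
    have ht2 := ht.2
    -- the difference is `(t-s)(4/((1-2s)(1-2t)) - 1/(st))`, and `2s > 1-2s` for `s > 1/4`
    have e : (t⁻¹ + 2 * (1 - 2 * t)⁻¹) - (s⁻¹ + 2 * (1 - 2 * s)⁻¹)
        = (t - s) * (4 * (s * t) - (1 - 2 * s) * (1 - 2 * t)) /
          ((1 - 2 * s) * (1 - 2 * t) * (s * t)) := by
      have h1 : t ≠ 0 := by linarith
      have h2 : s ≠ 0 := by linarith
      have h3 : 1 - 2 * t ≠ 0 := by linarith
      have h4 : 1 - 2 * s ≠ 0 := by linarith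
      rw [eq_div_iff (by positivity)]
      have i1 := mul_inv_cancel₀ h1
      have i2 := mul_inv_cancel₀ h2
      have i3 := mul_inv_cancel₀ h3
      have i4 := mul_inv_cancel₀ h4
      linear_combination (s * (1 - 2 * s) * (1 - 2 * t)) * i1 - (t * (1 - 2 * s) * (1 - 2 * t)) * i2
        + (2 * (1 - 2 * s) * s * t) * i3 - (2 * (1 - 2 * t) * s * t) * i4
    have : 0 < (t - s) * (4 * (s * t) - (1 - 2 * s) * (1 - 2 * t)) /
          ((1 - 2 * s) * (1 - 2 * t) * (s * t)) := by
      have h1 : 0 < t := by linarith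
      have h2 : 0 < s := by linarith
      have h3 : 0 < 1 - 2 * t := by linarith
      have h4 : 0 < 1 - 2 * s := by linarith
      have h5 : 0 < t - s := by linarith
      have h6 : 0 < 4 * (s * t) - (1 - 2 * s) * (1 - 2 * t) := by nlinarith
      positivity
    linarith

lemma f0_eq {β t : ℝ} (ht0 : 0 < t) (ht2 : t < 1 / 2) (ht : t ≠ 1 / 3) :
    f0 t = β ↔ Real.log t - Real.log (1 - 2 * t) - 3 * β / 2 * (3 * t - 1) = 0 := by
  have h : 1 - 3 * t ≠ 0 := fun h => ht (by linarith)
  rw [f0, if_neg ht, Real.log_div (by linarith) (by linarith)]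
  field_simp
  constructor <;> intro h <;> linarith

/-- On the half-axis from the centre to the midpoint of an edge, the potential has its unique
minimum at the saddle. -/
lemma ray_le {β q t : ℝ} (hβ : 2 < β) (hq : 1 / 3 < q) (hq2 : q < 1 / 2) (hf : f0 q = β)
    (ht : t ∈ Set.Icc (1 / 3 : ℝ) (1 / 2)) (htq : t ≠ q) :
    2 * G β q + G β (1 - 2 * q) < 2 * G β t + G β (1 - 2 * t) := by
  have hcv := axis_strictConvex β
  set L : ℝ → ℝ := fun t => Real.log t - Real.log (1 - 2 * t) - 3 * β / 2 * (3 * t - 1) with hL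
  have hLq : L q = 0 := (f0_eq (by linarith) hq2 hq.ne').1 hf
  have hL3 : L (1 / 3) = 0 := by simp only [hL]; norm_num
  have hneg : ∀ s ∈ Set.Ioo (1 / 3 : ℝ) q, L s < 0 := by
    intro s hs
    have ha : 0 < (q - s) / (q - 1 / 3) := div_pos (by linarith [hs.2]) (by linarith)
    have hb : 0 < (s - 1 / 3) / (q - 1 / 3) := div_pos (by linarith [hs.1]) (by linarith)
    have h := hcv.2 ⟨le_rfl, by norm_num⟩ ⟨hq.le, hq2⟩ hq.ne ha hb
      (by rw [← add_div, div_eq_one_iff_eq (by linarith)]; ring)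
    have e : ((q - s) / (q - 1 / 3)) • (1 / 3 : ℝ) + ((s - 1 / 3) / (q - 1 / 3)) • q = s := by
      have : q - 1 / 3 ≠ 0 := by linarith
      simp only [smul_eq_mul]
      rw [div_mul_eq_mul_div, div_mul_eq_mul_div, ← add_div, div_eq_iff this]; ring
    rw [e] at h
    simpa [hLq, show L 3⁻¹ = 0 by simpa using hL3] using h
  have hpos : ∀ s ∈ Set.Ioo q (1 / 2 : ℝ), 0 < L s := by
    intro s hs
    have hs1 := hs.1
    have ha : 0 < (s - q) / (s - 1 / 3) := div_pos (by linarith) (by linarith)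
    have hb : 0 < (q - 1 / 3) / (s - 1 / 3) := div_pos (by linarith) (by linarith)
    have h := hcv.2 ⟨le_rfl, by norm_num⟩ ⟨by linarith, hs.2⟩
      (by linarith : (1 / 3 : ℝ) < s).ne ha hb
      (by rw [← add_div, div_eq_one_iff_eq (by linarith)]; ring)
    have e : ((s - q) / (s - 1 / 3)) • (1 / 3 : ℝ) + ((q - 1 / 3) / (s - 1 / 3)) • s = q := by
      have : s - 1 / 3 ≠ 0 := by linarith
      simp only [smul_eq_mul]
      rw [div_mul_eq_mul_div, div_mul_eq_mul_div, ← add_div, div_eq_iff this]; ring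
    rw [e, hLq, hL3] at h
    have h' : 0 < (q - 1 / 3) / (s - 1 / 3) * L s := by simpa using h
    exact pos_of_mul_pos_right h' (div_pos (by linarith) (by linarith)).le
  have hcont : Continuous fun t => 2 * G β t + G β (1 - 2 * t) := by
    have := G_continuous β
    fun_prop
  have hder : ∀ s ∈ Set.Ioo (1 / 3 : ℝ) (1 / 2),
      deriv (fun t => 2 * G β t + G β (1 - 2 * t)) s = 2 / β * L s := by
    intro s hs
    have hs1 := hs.1
    have hs2 := hs.2
    have h1 : HasDerivAt (fun t : ℝ => 1 - 2 * t) (-(2 * 1)) s :=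
      ((hasDerivAt_id s).const_mul 2).const_sub 1
    have h2 := (G_hasDerivAt β (by linarith : 0 < 1 - 2 * s)).comp s h1
    have h3 := ((G_hasDerivAt β (by linarith : 0 < s)).const_mul 2).add h2
    refine h3.deriv.trans ?_
    rw [Real.log_mul (by norm_num) (by linarith), Real.log_mul (by norm_num) (by linarith)]
    simp only [hL]
    field_simp
    ring
  have hβ' : 0 < 2 / β := by positivity
  rcases lt_or_gt_of_ne htq with h | h
  · have hanti : StrictAntiOn (fun t => 2 * G β t + G β (1 - 2 * t)) (Set.Icc (1 / 3) q) := by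
      refine strictAntiOn_of_deriv_neg (convex_Icc _ _) hcont.continuousOn fun s hs => ?_
      rw [interior_Icc] at hs
      rw [hder s ⟨hs.1, hs.2.trans hq2⟩]
      exact mul_neg_of_pos_of_neg hβ' (hneg s hs)
    exact hanti ⟨ht.1, h.le⟩ ⟨hq.le, le_rfl⟩ h
  · have hmono : StrictMonoOn (fun t => 2 * G β t + G β (1 - 2 * t)) (Set.Icc q (1 / 2)) := by
      refine strictMonoOn_of_deriv_pos (convex_Icc _ _) hcont.continuousOn fun s hs => ?_
      rw [interior_Icc] at hs
      rw [hder s ⟨hq.trans hs.1, hs.2⟩]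
      exact mul_pos hβ' (hpos s hs)
    exact hmono ⟨le_rfl, hq2.le⟩ ⟨h.le, ht.2⟩ h

lemma potF_axis {β : ℝ} {i j k : Fin 3} (hij : i ≠ j) (hjk : j ≠ k) (hik : i ≠ k) {x : ℝ × ℝ}
    (h : X i x = X j x) : potF β x = 1 / 4 + (2 * G β (X i x) + G β (1 - 2 * X i x)) := by
  have hs := X_sum x
  rw [sum_distinct hij hjk hik] at hs
  rw [potF_eq, sum_distinct hij hjk hik, ← h, show X k x = 1 - 2 * X i x by linarith]
  ring

lemma potF_saddle (β q : ℝ) : potF β (q, q) = 1 / 4 + (2 * G β q + G β (1 - 2 * q)) := by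
  have := potF_axis (β := β) (i := 1) (j := 2) (k := 0) (by decide) (by decide) (by decide)
    (x := (q, q)) (by simp [X])
  simpa [X] using this

/-- Strict concavity of `G` beyond `1/3`: this is where `β > 2` makes the saddles unstable in the
direction parallel to the edge. -/
lemma G_transversal {β q s : ℝ} (hβ : 2 < β) (hs : 0 < s) (hsq : 1 / 3 < q - s) :
    G β (q + s) + G β (q - s) < 2 * G β q := by
  have hc : StrictConcaveOn ℝ (Set.Ici (1 / 3 : ℝ)) (G β) := by
    refine StrictAntiOn.strictConcaveOn_of_deriv (convex_Ici _) (G_continuous β).continuousOn ?_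
    rw [interior_Ici]
    intro a ha b hb hab
    simp only [Set.mem_Ioi] at ha hb
    rw [(G_hasDerivAt β (by linarith : 0 < a)).deriv, (G_hasDerivAt β (by linarith : 0 < b)).deriv,
      Real.log_mul (by norm_num) (by linarith), Real.log_mul (by norm_num) (by linarith)]
    have h1 : Real.log b - Real.log a ≤ 3 * (b - a) := by
      rw [← Real.log_div (by linarith) (by linarith)]
      refine (Real.log_le_sub_one_of_pos (by apply div_pos <;> linarith)).trans ?_
      rw [div_sub_one (by linarith), div_le_iff₀ (by linarith)]
      nlinarith
    have h2 : (1 / β) * (Real.log b - Real.log a) < 3 / 2 * (b - a) := by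
      have : 1 / β < 1 / 2 := one_div_lt_one_div_of_lt (by norm_num) hβ
      have h0 : 0 < 1 / β := by positivity
      nlinarith
    linarith
  have h := hc.2 (Set.mem_Ici.2 (by linarith)) (Set.mem_Ici.2 (by linarith))
    (by linarith : q - s < q + s).ne' (by norm_num : (0 : ℝ) < 1 / 2)
    (by norm_num : (0 : ℝ) < 1 / 2) (by norm_num)
  simp only [smul_eq_mul] at h
  rw [show 1 / 2 * (q + s) + 1 / 2 * (q - s) = q by ring] at h
  linarith

/-! ### Sectors -/

lemma D_isOpen (i : Fin 3) : IsOpen (D i) := by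
  have : D i = ⋂ j, {x | j ≠ i → X j x < X i x} := by ext; simp [D]
  rw [this]
  refine isOpen_iInter_of_finite fun j => ?_
  by_cases h : j = i
  · simp [h]
  · simpa [h] using isOpen_lt (X_continuous j) (X_continuous i)

lemma D_disjoint {i j : Fin 3} (h : i ≠ j) : Disjoint (D i) (D j) := by
  rw [Set.disjoint_left]
  intro x hi hj
  exact lt_asymm (hi j h.symm) (hj i h)

lemma exists_other (i : Fin 3) : ∃ j, i ≠ j := by
  revert i; decide

lemma exists_third {i j : Fin 3} (hij : i ≠ j) : ∃ k, j ≠ k ∧ i ≠ k := by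
  revert i j; decide

/-- The sublevel set avoids the rays where the two largest coordinates coincide. -/
lemma W_subset_sectors {β q : ℝ} (hβ : 2 < β) (hq : 1 / 3 < q) (hq2 : q < 1 / 2) (hf : f0 q = β) :
    Wset β q ⊆ ⋃ i, D i := by
  intro x hx
  by_contra hcon
  obtain ⟨i, hi⟩ := Finite.exists_max (fun i => X i x)
  have : ∃ j, j ≠ i ∧ X i x ≤ X j x := by
    by_contra! h
    exact hcon (Set.mem_iUnion.2 ⟨i, h⟩)
  obtain ⟨j, hji, hj⟩ := this
  obtain ⟨k, hjk, hik⟩ := exists_third hji.symm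
  have he : X i x = X j x := le_antisymm hj (hi j)
  have hs := X_sum x
  rw [sum_distinct hji.symm hjk hik] at hs
  have hk := hi k
  have hk0 := (mem_simplex_iff x).1 hx.1 k
  have hF := hx.2
  rw [potF_axis hji.symm hjk hik he, potF_saddle] at hF
  by_cases htq : X i x = q
  · rw [htq] at hF; exact lt_irrefl _ hF
  · have := ray_le hβ hq hq2 hf (t := X i x) ⟨by linarith, by linarith⟩ htq
    linarith

lemma component_subset_sector {β q : ℝ} (hβ : 2 < β) (hq : 1 / 3 < q) (hq2 : q < 1 / 2)
    (hf : f0 q = β) {i : Fin 3} {x : ℝ × ℝ} (hx : x ∈ Wset β q) (hxi : x ∈ D i) :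
    connectedComponentIn (Wset β q) x ⊆ D i := by
  refine isPreconnected_connectedComponentIn.subset_left_of_subset_union (D_isOpen i)
    (v := ⋃ j, ⋃ (_ : j ≠ i), D j)
    (isOpen_iUnion fun j => isOpen_iUnion fun _ => D_isOpen j) ?_ ?_
    ⟨x, mem_connectedComponentIn hx, hxi⟩
  · simp only [Set.disjoint_iUnion_right]
    exact fun j hj => D_disjoint hj.symm
  · intro y hy
    obtain ⟨j, hj⟩ := Set.mem_iUnion.1
      (W_subset_sectors hβ hq hq2 hf (connectedComponentIn_subset _ _ hy))
    by_cases h : j = i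
    · exact Or.inl (h ▸ hj)
    · exact Or.inr (by simp only [Set.mem_iUnion]; exact ⟨j, h, hj⟩)

/-! ### Minimisers on a component -/

lemma G_move_le {β a ε : ℝ} (hβ : 2 < β) (ha : 0 ≤ a) (ha1 : a ≤ 1) (hε : 0 < ε) (hε1 : ε < 1) :
    G β ((1 - ε) * a + ε / 3) ≤ G β a + 2 * ε := by
  have hconv := Real.convexOn_mul_log.2 (Set.mem_Ici.2 (by linarith : 0 ≤ 3 * a))
    (Set.mem_Ici.2 zero_le_one) (by linarith : 0 ≤ 1 - ε) hε.le (by ring)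
  simp only [smul_eq_mul, Real.log_one, mul_zero, add_zero, mul_one] at hconv
  rw [show (1 - ε) * (3 * a) + ε = 3 * ((1 - ε) * a + ε / 3) by ring] at hconv
  have hlow : -(1 : ℝ) ≤ 3 * a * Real.log (3 * a) := by
    rcases ha.eq_or_lt with h | h
    · simp [← h]
    · have := Real.one_sub_inv_le_log_of_pos (by linarith : 0 < 3 * a)
      have h2 := mul_le_mul_of_nonneg_left this (by linarith : 0 ≤ 3 * a)
      have h3 : 3 * a * (1 - (3 * a)⁻¹) = 3 * a - 1 := by field_simp
      linarith
  have hb : 1 / β < 1 / 2 := one_div_lt_one_div_of_lt (by norm_num) hβ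
  have hb0 : 0 < 1 / β := by positivity
  unfold G
  have h1 : ((1 - ε) * a + ε / 3) * Real.log (3 * ((1 - ε) * a + ε / 3)) - a * Real.log (3 * a)
      ≤ ε / 3 := by nlinarith
  have h2 : (1 / β) * (((1 - ε) * a + ε / 3) * Real.log (3 * ((1 - ε) * a + ε / 3))
      - a * Real.log (3 * a)) ≤ ε / 6 := by
    refine (mul_le_mul_of_nonneg_left h1 hb0.le).trans ?_
    nlinarith
  have h3 : a ^ 2 - ((1 - ε) * a + ε / 3) ^ 2 ≤ 2 * ε := by
    have : a ^ 2 - ((1 - ε) * a + ε / 3) ^ 2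
      = ε * ((a - 1 / 3) * (a + ((1 - ε) * a + ε / 3))) := by ring
    rw [this]
    have h5 : (1 - ε) * a + ε / 3 ≤ 1 := by nlinarith
    have h6 : 0 ≤ (1 - ε) * a + ε / 3 := by
      have : 0 ≤ (1 - ε) * a := mul_nonneg (by linarith) ha
      linarith
    have h4 : (a - 1 / 3) * (a + ((1 - ε) * a + ε / 3)) ≤ 2 := by nlinarith
    nlinarith
  linarith

/-- At a boundary point of the simplex, a small step towards the centre strictly lowers `F`. -/
lemma boundary_descent {β ε : ℝ} (hβ : 2 < β) {y : ℝ × ℝ} (hy : ∀ l, 0 ≤ X l y) {i : Fin 3}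
    (hi : X i y = 0) (hε : 0 < ε) (hε1 : ε < Real.exp (-(12 * β))) :
    potF β (y + ε • (((1 / 3, 1 / 3) : ℝ × ℝ) - y)) < potF β y := by
  have hε2 : ε < 1 := hε1.trans (by rw [Real.exp_lt_one_iff]; linarith)
  obtain ⟨j, hij⟩ := exists_other i
  obtain ⟨k, hjk, hik⟩ := exists_third hij
  have hs := X_sum y
  rw [sum_distinct hij hjk hik, hi] at hs
  rw [potF_eq, potF_eq, sum_distinct hij hjk hik, sum_distinct hij hjk hik]
  simp only [X_centre]
  have h1 := G_move_le hβ (hy j) (by linarith [hy k]) hε hε2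
  have h2 := G_move_le hβ (hy k) (by linarith [hy j]) hε hε2
  rw [hi]
  have h3 : G β 0 = 0 := by simp [G]
  have h4 : G β ((1 - ε) * 0 + ε / 3) < -4 * ε := by
    have hlog : Real.log ε < -(12 * β) := (Real.log_lt_iff_lt_exp hε).2 hε1
    rw [show (1 - ε) * 0 + ε / 3 = ε / 3 by ring]
    unfold G
    rw [show 3 * (ε / 3) = ε by ring]
    have : (1 / β) * (ε / 3 * Real.log ε) < (1 / β) * (ε / 3 * -(12 * β)) := by
      gcongr
    have e : (1 / β) * (ε / 3 * -(12 * β)) = -4 * ε := by field_simp; ring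
    nlinarith [sq_nonneg (ε / 3)]
  linarith

lemma simplex_isOpen : IsOpen simplexInt := by
  have : simplexInt = ⋂ i, {x | 0 < X i x} := by ext x; simp [mem_simplex_iff]
  rw [this]
  exact isOpen_iInter_of_finite fun i => isOpen_lt continuous_const (X_continuous i)

lemma simplex_convex : Convex ℝ simplexInt := by
  intro x hx y hy a b ha hb hab
  obtain ⟨h1, h2, h3⟩ := hx
  obtain ⟨h4, h5, h6⟩ := hy
  have key : ∀ u v : ℝ, 0 < u → 0 < v → 0 < a * u + b * v := by
    intro u v hu hv
    rcases ha.eq_or_lt with h | h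
    · have : b = 1 := by linarith
      simpa [← h, this] using hv
    · have := mul_pos h hu
      have := mul_nonneg hb hv.le
      linarith
  refine ⟨by simpa using key _ _ h1 h4, by simpa using key _ _ h2 h5, ?_⟩
  have := key (1 - x.1 - x.2) (1 - y.1 - y.2) (by linarith) (by linarith)
  simp only [Prod.fst_add, Prod.snd_add, Prod.smul_fst, Prod.smul_snd, smul_eq_mul]
  linarith

/-- Near a point of its closure lying below the level, a component of the sublevel set fills
the simplex. -/
lemma component_absorbs {β q : ℝ} {x y : ℝ × ℝ}
    (hy : y ∈ closure (connectedComponentIn (Wset β q) x)) (hF : potF β y < potF β (q, q)) :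
    ∃ r > 0, Metric.ball y r ∩ simplexInt ⊆ connectedComponentIn (Wset β q) x := by
  have ho : IsOpen {z | potF β z < potF β (q, q)} :=
    isOpen_lt (potF_continuous β) continuous_const
  obtain ⟨r, hr, hball⟩ := Metric.isOpen_iff.1 ho y hF
  refine ⟨r, hr, ?_⟩
  obtain ⟨z, hz, hzC⟩ := mem_closure_iff.1 hy _ Metric.isOpen_ball (Metric.mem_ball_self hr)
  have hpre : IsPreconnected (Metric.ball y r ∩ simplexInt) :=
    ((convex_ball y r).inter simplex_convex).isPreconnected
  rw [connectedComponentIn_eq hzC]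
  exact hpre.subset_connectedComponentIn ⟨hz, (connectedComponentIn_subset _ _ hzC).1⟩
    fun w hw => ⟨hw.2, hball hw.1⟩

/-- At an interior local minimum the derivative of `F` along `eᵢ - eⱼ` vanishes. -/
lemma critical_eq {β : ℝ} (hβ : 2 < β) {y : ℝ × ℝ} (hy : ∀ l, 0 < X l y)
    (hmin : IsLocalMin (potF β) y) (i j : Fin 3) :
    Real.log (X i y) - 3 * β / 2 * X i y = Real.log (X j y) - 3 * β / 2 * X j y := by
  rcases eq_or_ne i j with rfl | hij
  · rfl
  obtain ⟨k, hjk, hik⟩ := exists_third hij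
  have hc : Continuous fun s : ℝ => y + s • (E i - E j) := by fun_prop
  have hl : IsLocalMin (fun s : ℝ => potF β (y + s • (E i - E j))) 0 := by
    have hmin' : IsLocalMin (potF β) (y + (0 : ℝ) • (E i - E j)) := by simpa using hmin
    exact hmin'.comp_continuous (g := fun s : ℝ => y + s • (E i - E j)) hc.continuousAt
  have hd : HasDerivAt (fun s : ℝ => potF β (y + s • (E i - E j)))
      ((-(3 / 2) * X i y + (1 / β) * (Real.log (3 * X i y) + 1))
        - (-(3 / 2) * X j y + (1 / β) * (Real.log (3 * X j y) + 1))) 0 := by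
    have e : (fun s : ℝ => potF β (y + s • (E i - E j))) =
        fun s => 1 / 4 + (G β (X i y + s) + G β (X j y - s) + G β (X k y)) := by
      funext s
      rw [potF_eq, sum_distinct hij hjk hik]
      simp only [X_move]
      simp [hij, hij.symm, hik.symm, hjk.symm, sub_eq_add_neg]
    rw [e]
    have h1 : HasDerivAt (fun s : ℝ => X i y + s) 1 0 := (hasDerivAt_id 0).const_add _
    have h2 : HasDerivAt (fun s : ℝ => X j y - s) (-1) 0 := (hasDerivAt_id 0).const_sub _
    have h3 := HasDerivAt.comp (0 : ℝ) (h₂ := G β)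
      (by simpa using G_hasDerivAt β (hy i)) h1
    have h4 := HasDerivAt.comp (0 : ℝ) (h₂ := G β)
      (by simpa using G_hasDerivAt β (hy j)) h2
    refine (((h3.add h4).add_const (G β (X k y))).const_add (1 / 4)).congr_deriv ?_
    simp
    ring
  have h0 := hl.hasDerivAt_eq_zero hd
  rw [Real.log_mul (by norm_num) (hy i).ne', Real.log_mul (by norm_num) (hy j).ne'] at h0
  field_simp at h0
  linarith

/-- The strictly concave function `log t - c t` does not take a value three times. -/
lemma not_three_equal {c a b d v : ℝ} (ha : 0 < a) (hab : a < b) (hbd : b < d)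
    (h1 : Real.log a - c * a = v) (h2 : Real.log b - c * b = v) (h3 : Real.log d - c * d = v) :
    False := by
  have hda : 0 < d - a := by linarith
  have hu : 0 < (d - b) / (d - a) := div_pos (by linarith) hda
  have hv : 0 < (b - a) / (d - a) := div_pos (by linarith) hda
  have h := strictConcaveOn_log_Ioi.2 (Set.mem_Ioi.2 ha) (Set.mem_Ioi.2 (ha.trans (hab.trans hbd)))
    (hab.trans hbd).ne hu hv
    (by rw [← add_div, div_eq_one_iff_eq hda.ne']; ring)
  have e : ((d - b) / (d - a)) • a + ((b - a) / (d - a)) • d = b := by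
    simp only [smul_eq_mul]; field_simp; ring
  rw [e] at h
  simp only [smul_eq_mul] at h
  rw [show Real.log a = v + c * a by linarith, show Real.log d = v + c * d by linarith,
    show Real.log b = v + c * b by linarith] at h
  have e2 : (d - b) / (d - a) * (v + c * a) + (b - a) / (d - a) * (v + c * d) = v + c * b := by
    field_simp; ring
  linarith

/-- A component of the sublevel set meeting the sector `D i` contains the point `mᵢ`, whose
coordinates other than the `i`-th equal `p`: it is found as the minimiser of `F` on the closure
of the component. -/
lemma minimum_mem_component {β p q : ℝ} (hβ : 2 < β) (hq : 1 / 3 < q) (hq2 : q < 1 / 2)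
    (hsol : ∀ t ∈ Set.Ioo (0 : ℝ) (1 / 2), (f0 t = β ↔ t = p ∨ t = q)) {i : Fin 3}
    {x : ℝ × ℝ} (hx : x ∈ Wset β q) (hxi : x ∈ D i) :
    ∃ y ∈ connectedComponentIn (Wset β q) x, ∀ l, l ≠ i → X l y = p := by
  have hf : f0 q = β := (hsol q ⟨by linarith, hq2⟩).2 (Or.inr rfl)
  set C := connectedComponentIn (Wset β q) x with hC
  have hCs : C ⊆ simplexInt := fun z hz => (connectedComponentIn_subset _ _ hz).1
  have hxC : x ∈ C := mem_connectedComponentIn hx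
  have hcomp : IsCompact (closure C) := by
    refine (isCompact_Icc (a := ((0, 0) : ℝ × ℝ)) (b := (1, 1))).of_isClosed_subset
      isClosed_closure (closure_minimal ?_ isClosed_Icc)
    intro z hz
    obtain ⟨h1, h2, h3⟩ := hCs hz
    exact ⟨⟨h1.le, h2.le⟩, ⟨by simp; linarith, by simp; linarith⟩⟩
  obtain ⟨y, hyC, hymin⟩ := hcomp.exists_isMinOn ⟨x, subset_closure hxC⟩
    (potF_continuous β).continuousOn
  have hyF : potF β y < potF β (q, q) := lt_of_le_of_lt (hymin (subset_closure hxC)) hx.2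
  obtain ⟨r, hr, hball⟩ := component_absorbs hyC hyF
  have hynn : ∀ l, 0 ≤ X l y := by
    intro l
    have : closure C ⊆ {z | 0 ≤ X l z} :=
      closure_minimal (fun z hz => ((mem_simplex_iff z).1 (hCs hz) l).le)
        (isClosed_le continuous_const (X_continuous l))
    exact this hyC
  have hypos : ∀ l, 0 < X l y := by
    intro l
    by_contra hl
    have hl0 : X l y = 0 := le_antisymm (not_lt.1 hl) (hynn l)
    have hcont : Continuous fun s : ℝ => y + s • (((1 / 3, 1 / 3) : ℝ × ℝ) - y) := by fun_prop
    have hev : ∀ᶠ s : ℝ in nhds 0,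
        y + s • (((1 / 3, 1 / 3) : ℝ × ℝ) - y) ∈ Metric.ball y r := by
      refine hcont.continuousAt.eventually_mem (Metric.isOpen_ball.mem_nhds ?_)
      simpa using hr
    have hev2 : ∀ᶠ s : ℝ in nhds 0, s < Real.exp (-(12 * β)) :=
      Iio_mem_nhds (Real.exp_pos _)
    obtain ⟨s, ⟨hs1, hs2⟩, hs0⟩ :=
      (((hev.and hev2).filter_mono nhdsWithin_le_nhds).and
        (self_mem_nhdsWithin : Set.Ioi (0 : ℝ) ∈ nhdsWithin 0 (Set.Ioi 0))).exists
    have hs0' : 0 < s := hs0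
    have hs1' : s < 1 := hs2.trans (by rw [Real.exp_lt_one_iff]; linarith)
    have hlt := boundary_descent hβ hynn hl0 hs0' hs2
    have hmem : y + s • (((1 / 3, 1 / 3) : ℝ × ℝ) - y) ∈ C := by
      refine hball ⟨hs1, (mem_simplex_iff _).2 fun l => ?_⟩
      rw [X_centre]
      have := mul_nonneg (by linarith : 0 ≤ 1 - s) (hynn l)
      linarith
    exact absurd (hymin (subset_closure hmem)) (not_le.2 hlt)
  have hys : y ∈ simplexInt := (mem_simplex_iff y).2 hypos
  have hyC' : y ∈ C := hball ⟨Metric.mem_ball_self hr, hys⟩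
  have hloc : IsLocalMin (potF β) y := by
    filter_upwards [Filter.inter_mem (Metric.ball_mem_nhds y hr) (simplex_isOpen.mem_nhds hys)]
      with z hz using hymin (subset_closure (hball hz))
  have hyD : y ∈ D i := component_subset_sector hβ hq hq2 hf hx hxi hyC'
  refine ⟨y, hyC', fun l hl => ?_⟩
  obtain ⟨k, hlk, hik⟩ := exists_third hl.symm
  have hcrit := critical_eq hβ hypos hloc
  have hlk' : X l y = X k y := by
    rcases lt_trichotomy (X l y) (X k y) with h | h | h
    · exact (not_three_equal (hypos l) h (hyD k hik.symm) (hcrit l i) (hcrit k i) rfl).elim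
    · exact h
    · exact (not_three_equal (hypos k) h (hyD l hl) (hcrit k i) (hcrit l i) rfl).elim
  have hs := X_sum y
  rw [sum_distinct hl.symm hlk hik] at hs
  have hli := hyD l hl
  have hl0 := hypos l
  have hi : X i y = 1 - 2 * X l y := by linarith
  have hlt : X l y < 1 / 3 := by linarith
  have hfl : f0 (X l y) = β := by
    rw [f0_eq hl0 (by linarith) hlt.ne]
    have := hcrit l i
    rw [hi] at this
    linarith
  rcases (hsol _ ⟨hl0, by linarith⟩).1 hfl with h | h
  · exact h
  · linarith

/-! ### Near the saddles -/

/-- Moving from the saddle `σ_k` in the direction `eᵢ - eⱼ` enters the part of the sublevel set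
in the sector `D i`. -/
lemma saddle_move {β q s : ℝ} (hβ : 2 < β) (hq2 : q < 1 / 2) {i j k : Fin 3}
    (hij : i ≠ j) (hjk : j ≠ k) (hik : i ≠ k) {z : ℝ × ℝ} (hzi : X i z = q) (hzj : X j z = q)
    (hs : 0 < s) (hsq : s < q - 1 / 3) :
    z + s • (E i - E j) ∈ Wset β q ∧ z + s • (E i - E j) ∈ D i := by
  have hsum := X_sum z
  rw [sum_distinct hij hjk hik] at hsum
  have hcov : ∀ l : Fin 3, l = i ∨ l = j ∨ l = k := by omega
  have e1 : X i (z + s • (E i - E j)) = q + s := by rw [X_move]; simp [hij, hzi]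
  have e2 : X j (z + s • (E i - E j)) = q - s := by
    rw [X_move]; simp [hij.symm, hzj, sub_eq_add_neg]
  have e3 : X k (z + s • (E i - E j)) = 1 - 2 * q := by
    rw [X_move]; simp [hik.symm, hjk.symm]; linarith
  refine ⟨⟨(mem_simplex_iff _).2 fun l => ?_, ?_⟩, fun l hl => ?_⟩
  · rcases hcov l with rfl | rfl | rfl
    · rw [e1]; linarith
    · rw [e2]; linarith
    · rw [e3]; linarith
  · rw [potF_eq, sum_distinct hij hjk hik, e1, e2, e3, potF_saddle]
    have := G_transversal hβ hs (q := q) (by linarith)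
    linarith
  · rcases hcov l with rfl | rfl | rfl
    · exact absurd rfl hl
    · rw [e1, e2]; linarith
    · rw [e1, e3]; linarith

/-- for `β > 2`, with `p < 1/3 < q` the exact solutions of `f₀(t) = β` in
`(0,1/2)`, the valleys `W_β(i)` (connected components of `{F_β < H_β}` containing the
local minima `m_i^β`) are pairwise distinct, and for `{i,j,k} = {0,1,2}` the intersection
of the closures of `W_β(i)` and `W_β(j)` is exactly the saddle point `{σ_k^β}`. -/
theorem potts_valley_structure_low_temperature (β p q : ℝ) (hβ : 2 < β)
    (hp0 : 0 < p) (hp : p < 1 / 3) (hq : 1 / 3 < q) (hq2 : q < 1 / 2)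
    (hsol : ∀ t ∈ Set.Ioo (0 : ℝ) (1 / 2), (f0 t = β ↔ t = p ∨ t = q))
    (m σ : Fin 3 → ℝ × ℝ)
    (hm : m = ![(p, p), (1 - 2 * p, p), (p, 1 - 2 * p)])
    (hσ : σ = ![(q, q), (1 - 2 * q, q), (q, 1 - 2 * q)])
    (W : Fin 3 → Set (ℝ × ℝ))
    (hW : W = fun i =>
      connectedComponentIn {x ∈ simplexInt | potF β x < potF β (q, q)} (m i)) :
    (∀ i j, i ≠ j → W i ≠ W j) ∧
    (∀ i j k : Fin 3, i ≠ j → j ≠ k → i ≠ k →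
      closure (W i) ∩ closure (W j) = {σ k}) := by
  have hf : f0 q = β := (hsol q ⟨by linarith, hq2⟩).2 (Or.inr rfl)
  have hW' : ∀ i, W i = connectedComponentIn (Wset β q) (m i) := fun i => by rw [hW]; rfl
  have hmX : ∀ i l, l ≠ i → X l (m i) = p := by
    intro i l h
    subst hm
    fin_cases i <;> fin_cases l <;> simp [X] at h ⊢ <;> ring
  have hσX : ∀ k l, l ≠ k → X l (σ k) = q := by
    intro i l h
    subst hσ
    fin_cases i <;> fin_cases l <;> simp [X] at h ⊢ <;> ring
  -- every point of the sublevel set in the sector `D i` lies in the valley of `m i`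
  have key : ∀ i x, x ∈ Wset β q → x ∈ D i → x ∈ W i := by
    intro i x hx hxi
    obtain ⟨y, hy, hyX⟩ := minimum_mem_component hβ hq hq2 hsol hx hxi
    obtain ⟨j, hij⟩ := exists_other i
    obtain ⟨k, hjk, hik⟩ := exists_third hij
    have hym : y = m i := by
      refine X_ext (i := j) (j := k) (k := i) hjk hik.symm hij.symm ?_ ?_
      · rw [hyX j hij.symm, hmX i j hij.symm]
      · rw [hyX k hik.symm, hmX i k hik.symm]
    rw [hW', ← hym, ← connectedComponentIn_eq hy]
    exact mem_connectedComponentIn hx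
  have hmove : ∀ i j k, i ≠ j → j ≠ k → i ≠ k → ∀ s, 0 < s → s < q - 1 / 3 →
      σ k + s • (E i - E j) ∈ W i ∧ σ k + s • (E i - E j) ∈ D i := by
    intro i j k hij hjk hik s hs hsq
    have := saddle_move hβ hq2 hij hjk hik (hσX k i hik) (hσX k j hjk) hs hsq
    exact ⟨key i _ this.1 this.2, this.2⟩
  have hne : ∀ i, ∃ x ∈ W i, x ∈ D i := by
    intro i
    obtain ⟨j, hij⟩ := exists_other i
    obtain ⟨k, hjk, hik⟩ := exists_third hij
    exact ⟨_, hmove i j k hij hjk hik ((q - 1 / 3) / 2) (by linarith) (by linarith)⟩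
  have hWs : ∀ i, W i ⊆ Wset β q := fun i => by
    rw [hW']; exact connectedComponentIn_subset _ _
  have hWD : ∀ i, W i ⊆ D i := by
    intro i
    obtain ⟨x, hx, hxD⟩ := hne i
    have h := component_subset_sector hβ hq hq2 hf (hWs i hx) hxD
    rw [hW'] at hx ⊢
    rwa [connectedComponentIn_eq hx]
  refine ⟨fun i j hij h => ?_, fun i j k hij hjk hik => ?_⟩
  · obtain ⟨x, hx, hxD⟩ := hne i
    exact Set.disjoint_left.1 (D_disjoint hij) hxD (hWD j (h ▸ hx))
  have hcl : ∀ a b, closure (W a) ⊆ {z | X b z ≤ X a z} := fun a b =>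
    closure_minimal (fun z hz => by
      rcases eq_or_ne b a with rfl | h
      · exact le_refl (X b z)
      · exact (hWD a hz b h).le) (isClosed_le (X_continuous b) (X_continuous a))
  have hclF : closure (W i) ⊆ {z | potF β z ≤ potF β (q, q)} :=
    closure_minimal (fun z hz => (hWs i hz).2.le)
      (isClosed_le (potF_continuous β) continuous_const)
  have hcl0 : closure (W i) ⊆ {z | 0 ≤ X k z} :=
    closure_minimal (fun z hz => ((mem_simplex_iff z).1 (hWs i hz).1 k).le)
      (isClosed_le continuous_const (X_continuous k))
  have hmem : ∀ a b, a ≠ b → b ≠ k → a ≠ k → σ k ∈ closure (W a) := by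
    intro a b hab hbk hak
    have hc : Continuous fun s : ℝ => σ k + s • (E a - E b) := by fun_prop
    have ht : Filter.Tendsto (fun s : ℝ => σ k + s • (E a - E b))
        (nhdsWithin 0 (Set.Ioi 0)) (nhds (σ k)) := by
      have := hc.tendsto 0
      simp only [zero_smul, add_zero] at this
      exact this.mono_left nhdsWithin_le_nhds
    refine mem_closure_of_tendsto ht ?_
    filter_upwards [Ioo_mem_nhdsGT (by linarith : (0 : ℝ) < q - 1 / 3)] with s hs
    exact (hmove a b k hab hbk hak s hs.1 hs.2).1
  apply Set.Subset.antisymm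
  · rintro z ⟨hzi, hzj⟩
    have h1 : X j z ≤ X i z := hcl i j hzi
    have h2 : X i z ≤ X j z := hcl j i hzj
    have h3 : X k z ≤ X i z := hcl i k hzi
    have h4 : 0 ≤ X k z := hcl0 hzi
    have h5 : potF β z ≤ potF β (q, q) := hclF hzi
    have he : X i z = X j z := le_antisymm h2 h1
    have hs := X_sum z
    rw [sum_distinct hij hjk hik] at hs
    rw [potF_axis hij hjk hik he, potF_saddle] at h5
    have htq : X i z = q := by
      by_contra htq
      have := ray_le hβ hq hq2 hf (t := X i z) ⟨by linarith, by linarith⟩ htq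
      linarith
    refine X_ext hij hjk hik ?_ ?_
    · rw [htq, hσX k i hik]
    · rw [← he, htq, hσX k j hjk]
  · rintro z rfl
    exact ⟨hmem i j hij hjk hik, hmem j i hij.symm hik hjk⟩
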